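/- arXiv:1909.00409 — 6 statements merged into one kernel-verified Lean document; each statement's English description precedes it below -/
import Mathlib

section
/- Let α be a set, C ⊆ α, and let φ, ψ : ℝ → α → α be two one-parameter groups of maps (φ 0 = id, φ (s+t) = φ s ∘ φ t, and likewise for ψ). Assume that the two flows agree along trajectories avoiding C, i.e. for every q ∈ α and every s ≥ 0, if ψ u q ∉ C for all u ∈ [0, s], then φ s q = ψ s q. If p ∈ α and τ ≥ 0 are such that ψ u p ∉ C for all u ≥ τ, then for all real t, t' with t' ≥ t > τ one has φ (−t') (ψ t' p) = φ (−t) (ψ t p); that is, the scattering composition φ (−t) ∘ ψ t stabilizes at p after the exit time τ. -/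
open Set

section Scattering

variable {G α : Type*}

/-- The time-`t` scattering composition `φ (-t) ∘ ψ t` of two flows, which compares the dynamics `ψ`
with the reference dynamics `φ`; its limit as `t → ∞` is the object of the error removal lemma. -/
def scattering [Neg G] (φ ψ : G → α → α) (t : G) : α → α :=
  φ (-t) ∘ ψ t

/-- Two flows agree outside `C`: `φ` and `ψ` send `q` to the same point at time `s` whenever the
trajectory of `q` avoids `C` on `[0, s]`. Only the `ψ`-trajectory is required to avoid `C`. -/
def AgreeOutside [Zero G] [LE G] (C : Set α) (φ ψ : G → α → α) : Prop :=
  ∀ q s, 0 ≤ s → (∀ u, 0 ≤ u → u ≤ s → ψ u q ∉ C) → φ s q = ψ s q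

variable [AddGroup G] {φ ψ : G → α → α} {t t' : G} {p : α}

theorem scattering_eq_of_apply_sub_eq (hφ : ∀ s t x, φ (s + t) x = φ s (φ t x))
    (h : φ (t' - t) (ψ t p) = ψ t' p) : scattering φ ψ t' p = scattering φ ψ t p :=
  calc
    φ (-t') (ψ t' p) = φ (-t') (φ (t' - t) (ψ t p)) := by rw [h]
    _ = φ (-t' + (t' - t)) (ψ t p) := (hφ _ _ _).symm
    _ = φ (-t) (ψ t p) := by rw [sub_eq_add_neg, neg_add_cancel_left]

variable [Preorder G] [AddRightMono G] {C : Set α}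

theorem AgreeOutside.apply_sub_eq (hagree : AgreeOutside C φ ψ)
    (hψ : ∀ s t x, ψ (s + t) x = ψ s (ψ t x)) (htt' : t ≤ t')
    (havoid : ∀ u ∈ Icc t t', ψ u p ∉ C) : φ (t' - t) (ψ t p) = ψ t' p := by
  have havoid_shift (u : G) (hu : 0 ≤ u) (hu' : u ≤ t' - t) : ψ u (ψ t p) ∉ C := by
    rw [← hψ]
    exact havoid (u + t) ⟨le_add_of_nonneg_left hu, le_sub_iff_add_le.mp hu'⟩
  calc
    φ (t' - t) (ψ t p) = ψ (t' - t) (ψ t p) := hagree _ _ (sub_nonneg.mpr htt') havoid_shift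
    _ = ψ t' p := by rw [← hψ, sub_add_cancel]

theorem scattering_stabilizes_general (hφ : ∀ s t x, φ (s + t) x = φ s (φ t x))
    (hψ : ∀ s t x, ψ (s + t) x = ψ s (ψ t x)) (hagree : AgreeOutside C φ ψ) (htt' : t ≤ t')
    (havoid : ∀ u ∈ Icc t t', ψ u p ∉ C) : scattering φ ψ t' p = scattering φ ψ t p :=
  scattering_eq_of_apply_sub_eq hφ (hagree.apply_sub_eq hψ htt' havoid)

end Scattering

/-- Scattering composition `φ (−t) ∘ ψ t` stabilizes at `p` after the exit time `τ`:
two one-parameter groups of maps that agree along trajectories avoiding `C`. -/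
theorem scattering_stabilizes {α : Type*} (C : Set α) (φ ψ : ℝ → α → α)
    (hφ0 : ∀ x, φ 0 x = x) (hφadd : ∀ s t x, φ (s + t) x = φ s (φ t x))
    (hψ0 : ∀ x, ψ 0 x = x) (hψadd : ∀ s t x, ψ (s + t) x = ψ s (ψ t x))
    (hagree : ∀ q : α, ∀ s : ℝ, 0 ≤ s →
      (∀ u : ℝ, 0 ≤ u → u ≤ s → ψ u q ∉ C) → φ s q = ψ s q)
    (p : α) (τ : ℝ) (hτ : 0 ≤ τ) (hexit : ∀ u : ℝ, τ ≤ u → ψ u p ∉ C) :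
    ∀ t t' : ℝ, τ < t → t ≤ t' → φ (-t') (ψ t' p) = φ (-t) (ψ t p) := by
  intro t t' ht htt'
  exact scattering_stabilizes_general hφadd hψadd hagree htt' fun u hu ↦ hexit u (ht.le.trans hu.1)
end

section
/- Let α be a set, C ⊆ α, and let φ, ψ : ℝ → α → α be two one-parameter groups of maps (φ 0 = id, φ (s+t) = φ s ∘ φ t, and likewise for ψ). Assume that for every q ∈ α and every s ≥ 0, if ψ u q ∉ C for all u ∈ [0, s], then φ s q = ψ s q; and assume that for every p ∈ α there exists τ(p) ≥ 0 such that ψ u p ∉ C for all u ≥ τ(p). Then there exists a map κ : α → α such that (i) for every p ∈ α and every t > τ(p), κ p = φ (−t) (ψ t p), and (ii) κ intertwines the two flows: κ (ψ s p) = φ s (κ p) for all s ∈ ℝ and p ∈ α. -/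
/-!
Past its exit time, the `ψ`-trajectory of a point is also a `φ`-trajectory, so `φ (-t) (ψ t p)` no
longer depends on `t`; its eventual value is `κ p`. Starting from `ψ s p` instead of `p` merely
shifts time: `φ (-t) (ψ t (ψ s p)) = φ s (φ (-(t + s)) (ψ (t + s) p))`. For `t` large both sides
have stabilized, which gives `κ (ψ s p) = φ s (κ p)`.
-/

section ScatteringMap

variable {T α : Type*} [AddGroup T]

/-- The finite-time approximation `φ (-t) ∘ ψ t` of the scattering map: evolve by `ψ` up to
time `t`, then back by `φ`. The flows are unbundled families of maps. -/
def finiteTimeScattering (φ ψ : T → α → α) (t : T) (p : α) : α :=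
  φ (-t) (ψ t p)

/-- The scattering map `lim_{t → ∞} φ (-t) ∘ ψ t`, encoded by its approximation at a time `τ p`,
possibly depending on the point `p`, after which the approximations are meant to be constant. -/
def scatteringMap (φ ψ : T → α → α) (τ : α → T) (p : α) : α :=
  finiteTimeScattering φ ψ (τ p) p

variable {φ ψ : T → α → α}

lemma finiteTimeScattering_eq_of_agree (hφadd : ∀ s t x, φ (s + t) x = φ s (φ t x))
    {p : α} {a t : T} (hagree : φ (t - a) (ψ a p) = ψ t p) :
    finiteTimeScattering φ ψ a p = finiteTimeScattering φ ψ t p :=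
  calc φ (-a) (ψ a p) = φ (-t + (t - a)) (ψ a p) := by rw [sub_eq_add_neg, neg_add_cancel_left]
    _ = φ (-t) (φ (t - a) (ψ a p)) := hφadd _ _ _
    _ = φ (-t) (ψ t p) := by rw [hagree]

lemma finiteTimeScattering_flow (hφadd : ∀ s t x, φ (s + t) x = φ s (φ t x))
    (hψadd : ∀ s t x, ψ (s + t) x = ψ s (ψ t x)) (s t : T) (p : α) :
    finiteTimeScattering φ ψ t (ψ s p) = φ s (finiteTimeScattering φ ψ (t + s) p) :=
  calc φ (-t) (ψ t (ψ s p)) = φ (-t) (ψ (t + s) p) := by rw [hψadd]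
    _ = φ (s + -(t + s)) (ψ (t + s) p) := by rw [neg_add_rev, add_neg_cancel_left]
    _ = φ s (φ (-(t + s)) (ψ (t + s) p)) := hφadd _ _ _

variable [Preorder T] [AddRightMono T]

lemma flow_agree_after_exit {C : Set α} (hψadd : ∀ s t x, ψ (s + t) x = ψ s (ψ t x))
    (hagree : ∀ q s, 0 ≤ s → (∀ u, 0 ≤ u → u ≤ s → ψ u q ∉ C) → φ s q = ψ s q)
    {p : α} {a t : T} (hexit : ∀ u, a ≤ u → ψ u p ∉ C) (hat : a ≤ t) :
    φ (t - a) (ψ a p) = ψ t p := by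
  have avoids : ∀ u, 0 ≤ u → u ≤ t - a → ψ u (ψ a p) ∉ C := fun u hu _ ↦
    hψadd u a p ▸ hexit (u + a) (le_add_of_nonneg_left hu)
  rw [hagree _ _ (sub_nonneg.2 hat) avoids, ← hψadd, sub_add_cancel]

lemma scatteringMap_flow [IsDirectedOrder T] (hφadd : ∀ s t x, φ (s + t) x = φ s (φ t x))
    (hψadd : ∀ s t x, ψ (s + t) x = ψ s (ψ t x)) {τ : α → T}
    (hstable : ∀ p t, τ p ≤ t → scatteringMap φ ψ τ p = finiteTimeScattering φ ψ t p)
    (s : T) (p : α) :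
    scatteringMap φ ψ τ (ψ s p) = φ s (scatteringMap φ ψ τ p) := by
  obtain ⟨t, ht, hts⟩ := exists_ge_ge (τ (ψ s p)) (τ p - s)
  rw [hstable _ t ht, hstable p (t + s) (sub_le_iff_le_add.1 hts),
    finiteTimeScattering_flow hφadd hψadd]

theorem scattering_map_exists_general [IsDirectedOrder T] (C : Set α) (φ ψ : T → α → α)
    (hφadd : ∀ s t x, φ (s + t) x = φ s (φ t x))
    (hψadd : ∀ s t x, ψ (s + t) x = ψ s (ψ t x))
    (hagree : ∀ q s, 0 ≤ s → (∀ u, 0 ≤ u → u ≤ s → ψ u q ∉ C) → φ s q = ψ s q)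
    (τ : α → T) (hexit : ∀ p u, τ p ≤ u → ψ u p ∉ C) :
    ∃ κ : α → α,
      (∀ p t, τ p ≤ t → κ p = φ (-t) (ψ t p)) ∧
      (∀ s p, κ (ψ s p) = φ s (κ p)) := by
  have stable : ∀ p t, τ p ≤ t → scatteringMap φ ψ τ p = finiteTimeScattering φ ψ t p :=
    fun p _ ht ↦ finiteTimeScattering_eq_of_agree hφadd <|
      flow_agree_after_exit hψadd hagree (hexit p) ht
  exact ⟨scatteringMap φ ψ τ, stable, scatteringMap_flow hφadd hψadd stable⟩

end ScatteringMap

/-- The scattering map `κ = lim_{t→∞} φ(−t) ∘ ψ t` exists (the limit is attained in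
finite time, after the exit time `τ p` of each point) and intertwines the two flows. -/
theorem scattering_map_exists {α : Type*} (C : Set α) (φ ψ : ℝ → α → α)
    (hφ0 : ∀ x, φ 0 x = x) (hφadd : ∀ s t x, φ (s + t) x = φ s (φ t x))
    (hψ0 : ∀ x, ψ 0 x = x) (hψadd : ∀ s t x, ψ (s + t) x = ψ s (ψ t x))
    (hagree : ∀ q : α, ∀ s : ℝ, 0 ≤ s →
      (∀ u : ℝ, 0 ≤ u → u ≤ s → ψ u q ∉ C) → φ s q = ψ s q)
    (τ : α → ℝ) (hτ : ∀ p, 0 ≤ τ p)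
    (hexit : ∀ p : α, ∀ u : ℝ, τ p ≤ u → ψ u p ∉ C) :
    ∃ κ : α → α,
      (∀ p : α, ∀ t : ℝ, τ p < t → κ p = φ (-t) (ψ t p)) ∧
      (∀ s : ℝ, ∀ p : α, κ (ψ s p) = φ s (κ p)) := by
  obtain ⟨κ, hκ, hflow⟩ := scattering_map_exists_general C φ ψ hφadd hψadd hagree τ hexit
  exact ⟨κ, fun p t ht ↦ hκ p t ht.le, hflow⟩
end

section
/- Let A : ℝ → ℝ be continuous, c ∈ (−1, 1], T > 0, and define E(t) = exp(−2∫₀ᵗ A(s) ds) and Ξ(t) = (1 + c − (1 − c)·E(t)) / (1 + c + (1 − c)·E(t)). Then Ξ(T) = Ξ(0) if and only if c = 1 or ∫₀ᵀ A(s) ds = 0. Moreover, if A is T-periodic and ∫₀ᵀ A(s) ds = 0, then Ξ is T-periodic: Ξ(t + T) = Ξ(t) for all t ∈ ℝ. -/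
open Real

/-!
For fixed `c ≠ ±1` the value `Ξ(t)` is an injective (Möbius) function of `E(t)`, hence of
`∫₀ᵗ A`, so the flow is back at its initial value exactly when that integral vanishes; the values
`c = ±1` are the equilibria of `Ξ' = A (1 - Ξ²)`.
-/

theorem sub_div_add_eq_sub_div_add_iff {K : Type*} [Field K] [NeZero (2 : K)] {a b x y : K}
    (hx : a + b * x ≠ 0) (hy : a + b * y ≠ 0) :
    (a - b * x) / (a + b * x) = (a - b * y) / (a + b * y) ↔ a = 0 ∨ b = 0 ∨ x = y := by
  have cross_difference : (a - b * x) * (a + b * y) - (a - b * y) * (a + b * x) =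
      2 * (a * (b * (y - x))) := by ring
  rw [div_eq_div_iff hx hy, ← sub_eq_zero, cross_difference]
  simp only [mul_eq_zero, two_ne_zero, false_or, sub_eq_zero, eq_comm (a := y)]

theorem one_add_add_one_sub_mul_pos {K : Type*} [Ring K] [LinearOrder K] [IsStrictOrderedRing K]
    {c x : K} (hc : c ∈ Set.Ioc (-1) 1) (hx : 0 ≤ x) : 0 < 1 + c + (1 - c) * x :=
  add_pos_of_pos_of_nonneg (neg_lt_iff_pos_add'.mp hc.1) (mul_nonneg (sub_nonneg.mpr hc.2) hx)

theorem periodic_integral_of_integral_eq_zero {F : Type*} [NormedAddCommGroup F]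
    [NormedSpace ℝ F] {f : ℝ → F} {T : ℝ} (hf : Function.Periodic f T)
    (hf_int : ∀ a b, IntervalIntegrable f MeasureTheory.volume a b)
    (hT : ∫ s in (0 : ℝ)..T, f s = 0) :
    Function.Periodic (fun t => ∫ s in (0 : ℝ)..t, f s) T := fun t => by
  simpa only [zero_add, hT, add_zero] using hf.intervalIntegral_add_eq_add 0 t hf_int

/-- The factor `E(t) = exp (-2 ∫₀ᵗ A)` through which the flow depends on time. -/
noncomputable def flowFactor (A : ℝ → ℝ) (t : ℝ) : ℝ :=
  exp (-2 * ∫ s in (0 : ℝ)..t, A s)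

/-- The function `Ξ` of the explicit flow formula, which solves `Ξ' = A (1 - Ξ²)`, `Ξ(0) = c`. Where
the denominator vanishes, which requires `|c| > 1`, the solution has blown up and the value is the
junk `0`. -/
noncomputable def characteristicFlow (A : ℝ → ℝ) (c t : ℝ) : ℝ :=
  (1 + c - (1 - c) * flowFactor A t) / (1 + c + (1 - c) * flowFactor A t)

section

variable {A : ℝ → ℝ} {c T : ℝ}

theorem flowFactor_eq_iff {s t : ℝ} :
    flowFactor A s = flowFactor A t ↔ ∫ u in (0 : ℝ)..s, A u = ∫ u in (0 : ℝ)..t, A u :=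
  exp_injective.eq_iff.trans (mul_right_inj' (by norm_num))

theorem flowFactor_zero : flowFactor A 0 = 1 := by
  simp only [flowFactor, intervalIntegral.integral_same, mul_zero, exp_zero]

theorem characteristicFlow_eq_iff {s t : ℝ} (hs : 1 + c + (1 - c) * flowFactor A s ≠ 0)
    (ht : 1 + c + (1 - c) * flowFactor A t ≠ 0) :
    characteristicFlow A c s = characteristicFlow A c t ↔
      c = -1 ∨ c = 1 ∨ ∫ u in (0 : ℝ)..s, A u = ∫ u in (0 : ℝ)..t, A u := by
  rw [characteristicFlow, characteristicFlow, sub_div_add_eq_sub_div_add_iff hs ht,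
    flowFactor_eq_iff, add_eq_zero_iff_neg_eq, sub_eq_zero, eq_comm (a := -1), eq_comm (a := 1)]

theorem characteristicFlow_eq_initial_iff (hT : 1 + c + (1 - c) * flowFactor A T ≠ 0) :
    characteristicFlow A c T = characteristicFlow A c 0 ↔
      c = -1 ∨ c = 1 ∨ ∫ s in (0 : ℝ)..T, A s = 0 := by
  have denominator_zero : 1 + c + (1 - c) * flowFactor A 0 = 2 := by
    rw [flowFactor_zero]
    ring
  rw [characteristicFlow_eq_iff hT (denominator_zero ▸ two_ne_zero), intervalIntegral.integral_same]

theorem periodic_characteristicFlow (hA : Function.Periodic A T)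
    (hA_int : ∀ a b, IntervalIntegrable A MeasureTheory.volume a b)
    (hT : ∫ s in (0 : ℝ)..T, A s = 0) : Function.Periodic (characteristicFlow A c) T :=
  (periodic_integral_of_integral_eq_zero hA hA_int hT).comp
    fun I => (1 + c - (1 - c) * exp (-2 * I)) / (1 + c + (1 - c) * exp (-2 * I))

theorem flow_formula_periodicity_general
    (hA_int : ∀ a b, IntervalIntegrable A MeasureTheory.volume a b)
    (hT : 1 + c + (1 - c) * flowFactor A T ≠ 0) :
    (characteristicFlow A c T = characteristicFlow A c 0 ↔
      c = -1 ∨ c = 1 ∨ ∫ s in (0 : ℝ)..T, A s = 0) ∧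
    (Function.Periodic A T → ∫ s in (0 : ℝ)..T, A s = 0 →
      Function.Periodic (characteristicFlow A c) T) :=
  ⟨characteristicFlow_eq_initial_iff hT, fun hA => periodic_characteristicFlow hA hA_int⟩

end

/-- Periodicity criterion for the explicit flow of `Ẑ = Ξ₀∂_t − A(t)(1 − Ξ₀²)∂_{Ξ₀}`:
`Ξ(T) = Ξ(0)` iff `c = 1` or `∫₀ᵀ A = 0`, and if `A` is `T`-periodic with
`∫₀ᵀ A = 0` then `Ξ` is `T`-periodic. -/
theorem flow_formula_periodicity (A : ℝ → ℝ) (hA : Continuous A)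
    (c : ℝ) (hc : c ∈ Set.Ioc (-1 : ℝ) 1) (T : ℝ) (hT : 0 < T) :
    let E : ℝ → ℝ := fun t => Real.exp (-2 * ∫ s in (0:ℝ)..t, A s)
    let Ξ : ℝ → ℝ := fun t => (1 + c - (1 - c) * E t) / (1 + c + (1 - c) * E t)
    (Ξ T = Ξ 0 ↔ c = 1 ∨ (∫ s in (0:ℝ)..T, A s) = 0) ∧
    ((∀ t : ℝ, A (t + T) = A t) → (∫ s in (0:ℝ)..T, A s) = 0 →
      ∀ t : ℝ, Ξ (t + T) = Ξ t) := by
  simpa only [hc.1.ne', false_or] using! flow_formula_periodicity_general hA.intervalIntegrable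
    (one_add_add_one_sub_mul_pos hc (exp_nonneg _)).ne'
end

section
/- On T*ℝ⁴ = ℝ⁴ × ℝ⁴ with coordinates (x₀, x₁, x₂, x₃; ξ₀, ξ₁, ξ₂, ξ₃), let f₀(x, ξ) = ξ₃·x₁·x₂ + ξ₁·ξ₂/ξ₃, defined where ξ₃ ≠ 0. Fix an initial point (x⁰, ξ⁰) with ξ₃⁰ > 0 and define the curve γ(t) = (x₀⁰, x₁(t), x₂(t), x₃(t); ξ₀⁰, ξ₁(t), ξ₂(t), ξ₃⁰) by x₁(t) = cos t·x₁⁰ + sin t·ξ₂⁰/ξ₃⁰, x₂(t) = cos t·x₂⁰ + sin t·ξ₁⁰/ξ₃⁰, ξ₁(t) = cos t·ξ₁⁰ − sin t·ξ₃⁰·x₂⁰, ξ₂(t) = cos t·ξ₂⁰ − sin t·ξ₃⁰·x₁⁰, and x₃(t) = x₃⁰ + (sin 2t/2)·(x₁⁰x₂⁰ − ξ₁⁰ξ₂⁰/(ξ₃⁰)²) + ((1 − cos 2t)/2)·(x₁⁰ξ₁⁰ + x₂⁰ξ₂⁰)/ξ₃⁰. Then γ(0) = (x⁰, ξ⁰)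 and γ solves Hamilton's equations for f₀: for each i ∈ {0,1,2,3}, dxᵢ/dt = (∂f₀/∂ξᵢ)(γ(t)) and dξᵢ/dt = −(∂f₀/∂xᵢ)(γ(t)). In particular, at t = π/4 the flow fixes x₀, ξ₀, ξ₃ and sends the homogeneous coordinates (x₁, ξ̂₁; x₂, ξ̂₂), with ξ̂ᵢ = ξᵢ/ξ₃, to ((x₁ + ξ̂₂)/√2, (ξ̂₁ − x₂)/√2; (x₂ + ξ̂₁)/√2, (ξ̂₂ − x₁)/√2). -/
open Real

/-!
In the homogeneous coordinates `ξ̂ᵢ = ξᵢ / ξ₃` the momentum `ξ₃` is conserved and Hamilton's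
equations for `x₁, x₂, ξ̂₁, ξ̂₂` become linear: `(x₁, ξ̂₂)` and `(x₂, ξ̂₁)` both rotate clockwise at
unit speed. Along these rotations `ẋ₃ = x₁x₂ - ξ̂₁ξ̂₂` is a trigonometric polynomial of frequency
two, which integrates explicitly.
-/

/-- Hamilton's equations `ẋᵢ = ∂H/∂ξᵢ`, `ξ̇ᵢ = -∂H/∂xᵢ` for a curve `(x, ξ)` in `T*ℝ^ι`. The partial
derivatives are one-variable derivatives, so they are `0` where `H` is not differentiable along a
coordinate line. -/
def IsHamiltonianTrajectory {ι : Type*} [DecidableEq ι] (H : (ι → ℝ) → (ι → ℝ) → ℝ)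
    (x ξ : ℝ → ι → ℝ) : Prop :=
  ∀ (t : ℝ) (i : ι),
    HasDerivAt (fun s => x s i) (deriv (fun u => H (x t) (Function.update (ξ t) i u)) (ξ t i)) t ∧
    HasDerivAt (fun s => ξ s i) (-deriv (fun u => H (Function.update (x t) i u) (ξ t)) (x t i)) t

theorem IsHamiltonianTrajectory.of_hasDerivAt {ι : Type*} [DecidableEq ι]
    {H : (ι → ℝ) → (ι → ℝ) → ℝ} {x ξ Hx Hξ : ℝ → ι → ℝ}
    (hHx : ∀ t i, HasDerivAt (fun u => H (Function.update (x t) i u) (ξ t)) (Hx t i) (x t i))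
    (hHξ : ∀ t i, HasDerivAt (fun u => H (x t) (Function.update (ξ t) i u)) (Hξ t i) (ξ t i))
    (hx : ∀ t i, HasDerivAt (fun s => x s i) (Hξ t i) t)
    (hξ : ∀ t i, HasDerivAt (fun s => ξ s i) (-Hx t i) t) :
    IsHamiltonianTrajectory H x ξ := fun t i =>
  ⟨(hHξ t i).deriv.symm ▸ hx t i, (hHx t i).deriv.symm ▸ hξ t i⟩

section Trigonometry

variable (a b c d t : ℝ)

theorem hasDerivAt_cos_mul_add_sin_mul :
    HasDerivAt (fun s => cos s * a + sin s * b) (cos t * b - sin t * a) t :=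
  (((hasDerivAt_cos t).mul_const a).add ((hasDerivAt_sin t).mul_const b)).congr_deriv (by ring)

theorem hasDerivAt_cos_mul_sub_sin_mul :
    HasDerivAt (fun s => cos s * a - sin s * b) (-(cos t * b + sin t * a)) t :=
  (((hasDerivAt_cos t).mul_const a).sub ((hasDerivAt_sin t).mul_const b)).congr_deriv (by ring)

theorem hasDerivAt_sin_two_mul_div_two :
    HasDerivAt (fun s => sin (2 * s) / 2) (cos (2 * t)) t :=
  (((hasDerivAt_id' t).const_mul 2).sin.div_const 2).congr_deriv (by ring)

theorem hasDerivAt_one_sub_cos_two_mul_div_two :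
    HasDerivAt (fun s => (1 - cos (2 * s)) / 2) (sin (2 * t)) t :=
  ((((hasDerivAt_id' t).const_mul 2).cos.const_sub 1).div_const 2).congr_deriv (by ring)

theorem rotation_mul_sub_rotation_mul :
    (cos t * a + sin t * b) * (cos t * c + sin t * d)
        - (cos t * d - sin t * c) * (cos t * b - sin t * a) =
      cos (2 * t) * (a * c - d * b) + sin (2 * t) * (a * d + c * b) := by
  rw [cos_two_mul', sin_two_mul]
  ring

theorem sqrt_two_div_two_mul : √2 / 2 * a = a / √2 := by
  rw [sqrt_div_self', one_div_mul_eq_div]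

theorem cos_pi_div_four_mul_add_sin_pi_div_four_mul :
    cos (π / 4) * a + sin (π / 4) * b = (a + b) / √2 := by
  rw [cos_pi_div_four, sin_pi_div_four, ← mul_add, sqrt_two_div_two_mul]

theorem cos_pi_div_four_mul_sub_sin_pi_div_four_mul :
    cos (π / 4) * a - sin (π / 4) * b = (a - b) / √2 := by
  rw [cos_pi_div_four, sin_pi_div_four, ← mul_sub, sqrt_two_div_two_mul]

end Trigonometry

/-- The Hamiltonian `f₀ = ξ₃(x₁x₂ + ξ̂₁ξ̂₂)` on `T*ℝ⁴`, meaningful where `ξ₃ ≠ 0`. -/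
noncomputable def birkhoffHamiltonian (x ξ : Fin 4 → ℝ) : ℝ :=
  ξ 3 * x 1 * x 2 + ξ 1 * ξ 2 / ξ 3

namespace birkhoffHamiltonian

/-- The partial derivatives `∂f₀/∂xᵢ`. -/
def positionGradient (x ξ : Fin 4 → ℝ) : Fin 4 → ℝ :=
  ![0, ξ 3 * x 2, ξ 3 * x 1, 0]

/-- The partial derivatives `∂f₀/∂ξᵢ`, valid where `ξ₃ ≠ 0`. -/
noncomputable def momentumGradient (x ξ : Fin 4 → ℝ) : Fin 4 → ℝ :=
  ![0, ξ 2 / ξ 3, ξ 1 / ξ 3, x 1 * x 2 - ξ 1 * ξ 2 / ξ 3 ^ 2]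

theorem hasDerivAt_update_position (x ξ : Fin 4 → ℝ) (i : Fin 4) :
    HasDerivAt (fun u => birkhoffHamiltonian (Function.update x i u) ξ)
      (positionGradient x ξ i) (x i) := by
  fin_cases i
  · exact hasDerivAt_const (x 0) (birkhoffHamiltonian x ξ)
  · exact ((((hasDerivAt_id' (x 1)).const_mul (ξ 3)).mul_const (x 2)).add_const _).congr_deriv
      (by simp [positionGradient])
  · exact (((hasDerivAt_id' (x 2)).const_mul (ξ 3 * x 1)).add_const _).congr_deriv
      (by simp [positionGradient])
  · exact hasDerivAt_const (x 3) (birkhoffHamiltonian x ξ)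

theorem hasDerivAt_update_momentum (x : Fin 4 → ℝ) {ξ : Fin 4 → ℝ} (hξ : ξ 3 ≠ 0) (i : Fin 4) :
    HasDerivAt (fun u => birkhoffHamiltonian x (Function.update ξ i u))
      (momentumGradient x ξ i) (ξ i) := by
  fin_cases i
  · exact hasDerivAt_const (ξ 0) (birkhoffHamiltonian x ξ)
  · exact ((((hasDerivAt_id' (ξ 1)).mul_const (ξ 2)).div_const (ξ 3)).const_add
      (ξ 3 * x 1 * x 2)).congr_deriv (by simp [momentumGradient])
  · exact ((((hasDerivAt_id' (ξ 2)).const_mul (ξ 1)).div_const (ξ 3)).const_add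
      (ξ 3 * x 1 * x 2)).congr_deriv (by simp [momentumGradient])
  · have linear_part : HasDerivAt (fun u => u * x 1 * x 2) (x 1 * x 2) (ξ 3) :=
      (((hasDerivAt_id' (ξ 3)).mul_const (x 1)).mul_const (x 2)).congr_deriv (by rw [one_mul])
    have inverse_part : HasDerivAt (fun u => ξ 1 * ξ 2 / u) (-(ξ 1 * ξ 2 / ξ 3 ^ 2)) (ξ 3) :=
      ((hasDerivAt_const (ξ 3) (ξ 1 * ξ 2)).fun_div (hasDerivAt_id' (ξ 3)) hξ).congr_deriv (by ring)
    exact (linear_part.add inverse_part).congr_deriv (sub_eq_add_neg _ _).symm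

/-- The position component `(x₀, x₁, x₂, x₃)` of the Hamiltonian flow of `f₀` started at
`(X, Ξ)`. -/
noncomputable def positionFlow (X Ξ : Fin 4 → ℝ) (t : ℝ) : Fin 4 → ℝ :=
  ![X 0,
    cos t * X 1 + sin t * (Ξ 2 / Ξ 3),
    cos t * X 2 + sin t * (Ξ 1 / Ξ 3),
    X 3 + sin (2 * t) / 2 * (X 1 * X 2 - Ξ 1 * Ξ 2 / Ξ 3 ^ 2)
      + (1 - cos (2 * t)) / 2 * ((X 1 * Ξ 1 + X 2 * Ξ 2) / Ξ 3)]

/-- The momentum component `(ξ₀, ξ₁, ξ₂, ξ₃)` of the Hamiltonian flow of `f₀` started at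
`(X, Ξ)`. -/
noncomputable def momentumFlow (X Ξ : Fin 4 → ℝ) (t : ℝ) : Fin 4 → ℝ :=
  ![Ξ 0,
    cos t * Ξ 1 - sin t * (Ξ 3 * X 2),
    cos t * Ξ 2 - sin t * (Ξ 3 * X 1),
    Ξ 3]

theorem positionFlow_zero (X Ξ : Fin 4 → ℝ) : positionFlow X Ξ 0 = X := by
  ext i
  fin_cases i <;> simp [positionFlow]

theorem momentumFlow_zero (X Ξ : Fin 4 → ℝ) : momentumFlow X Ξ 0 = Ξ := by
  ext i
  fin_cases i <;> simp [momentumFlow]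

variable (X : Fin 4 → ℝ) {Ξ : Fin 4 → ℝ}

theorem momentumFlow_one_div (hΞ : Ξ 3 ≠ 0) (t : ℝ) :
    momentumFlow X Ξ t 1 / Ξ 3 = cos t * (Ξ 1 / Ξ 3) - sin t * X 2 := by
  change (cos t * Ξ 1 - sin t * (Ξ 3 * X 2)) / Ξ 3 = _
  field_simp

theorem momentumFlow_two_div (hΞ : Ξ 3 ≠ 0) (t : ℝ) :
    momentumFlow X Ξ t 2 / Ξ 3 = cos t * (Ξ 2 / Ξ 3) - sin t * X 1 := by
  change (cos t * Ξ 2 - sin t * (Ξ 3 * X 1)) / Ξ 3 = _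
  field_simp

theorem momentumGradient_flow_three (hΞ : Ξ 3 ≠ 0) (t : ℝ) :
    momentumGradient (positionFlow X Ξ t) (momentumFlow X Ξ t) 3 =
      cos (2 * t) * (X 1 * X 2 - Ξ 1 * Ξ 2 / Ξ 3 ^ 2)
        + sin (2 * t) * ((X 1 * Ξ 1 + X 2 * Ξ 2) / Ξ 3) :=
  calc
    _ = positionFlow X Ξ t 1 * positionFlow X Ξ t 2
        - momentumFlow X Ξ t 1 / Ξ 3 * (momentumFlow X Ξ t 2 / Ξ 3) := by
      rw [div_mul_div_comm, ← sq]
      rfl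
    _ = cos (2 * t) * (X 1 * X 2 - Ξ 1 / Ξ 3 * (Ξ 2 / Ξ 3))
        + sin (2 * t) * (X 1 * (Ξ 1 / Ξ 3) + X 2 * (Ξ 2 / Ξ 3)) := by
      rw [momentumFlow_one_div X hΞ, momentumFlow_two_div X hΞ]
      exact rotation_mul_sub_rotation_mul (X 1) (Ξ 2 / Ξ 3) (X 2) (Ξ 1 / Ξ 3) t
    _ = _ := by ring

theorem hasDerivAt_positionFlow (hΞ : Ξ 3 ≠ 0) (t : ℝ) (i : Fin 4) :
    HasDerivAt (fun s => positionFlow X Ξ s i)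
      (momentumGradient (positionFlow X Ξ t) (momentumFlow X Ξ t) i) t := by
  fin_cases i
  · exact hasDerivAt_const _ _
  · exact (hasDerivAt_cos_mul_add_sin_mul _ _ t).congr_deriv (momentumFlow_two_div X hΞ t).symm
  · exact (hasDerivAt_cos_mul_add_sin_mul _ _ t).congr_deriv (momentumFlow_one_div X hΞ t).symm
  · exact ((((hasDerivAt_sin_two_mul_div_two t).mul_const _).const_add (X 3)).add
      ((hasDerivAt_one_sub_cos_two_mul_div_two t).mul_const _)).congr_deriv
      (momentumGradient_flow_three X hΞ t).symm

theorem hasDerivAt_momentumFlow (hΞ : Ξ 3 ≠ 0) (t : ℝ) (i : Fin 4) :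
    HasDerivAt (fun s => momentumFlow X Ξ s i)
      (-positionGradient (positionFlow X Ξ t) (momentumFlow X Ξ t) i) t := by
  have scale_rotation (a b : ℝ) :
      Ξ 3 * (cos t * a + sin t * (b / Ξ 3)) = cos t * (Ξ 3 * a) + sin t * b := by
    field_simp
  fin_cases i
  · exact (hasDerivAt_const t (Ξ 0)).congr_deriv neg_zero.symm
  · exact (hasDerivAt_cos_mul_sub_sin_mul _ _ t).congr_deriv
      (congrArg Neg.neg (scale_rotation (X 2) (Ξ 1)).symm)
  · exact (hasDerivAt_cos_mul_sub_sin_mul _ _ t).congr_deriv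
      (congrArg Neg.neg (scale_rotation (X 1) (Ξ 2)).symm)
  · exact (hasDerivAt_const t (Ξ 3)).congr_deriv neg_zero.symm

theorem isHamiltonianTrajectory_flow (hΞ : Ξ 3 ≠ 0) :
    IsHamiltonianTrajectory birkhoffHamiltonian (positionFlow X Ξ) (momentumFlow X Ξ) :=
  .of_hasDerivAt (fun _ => hasDerivAt_update_position _ _)
    (fun _ => hasDerivAt_update_momentum _ hΞ)
    (hasDerivAt_positionFlow X hΞ) (hasDerivAt_momentumFlow X hΞ)

end birkhoffHamiltonian

open birkhoffHamiltonian in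
theorem hamilton_flow_f0_general (X Ξ : Fin 4 → ℝ) (hΞ3 : Ξ 3 ≠ 0) :
    (positionFlow X Ξ 0 = X ∧ momentumFlow X Ξ 0 = Ξ) ∧
    IsHamiltonianTrajectory birkhoffHamiltonian (positionFlow X Ξ) (momentumFlow X Ξ) ∧
    (positionFlow X Ξ (π / 4) 0 = X 0 ∧ momentumFlow X Ξ (π / 4) 0 = Ξ 0 ∧
     momentumFlow X Ξ (π / 4) 3 = Ξ 3 ∧
     positionFlow X Ξ (π / 4) 1 = (X 1 + Ξ 2 / Ξ 3) / √2 ∧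
     momentumFlow X Ξ (π / 4) 1 / Ξ 3 = (Ξ 1 / Ξ 3 - X 2) / √2 ∧
     positionFlow X Ξ (π / 4) 2 = (X 2 + Ξ 1 / Ξ 3) / √2 ∧
     momentumFlow X Ξ (π / 4) 2 / Ξ 3 = (Ξ 2 / Ξ 3 - X 1) / √2) :=
  ⟨⟨positionFlow_zero X Ξ, momentumFlow_zero X Ξ⟩, isHamiltonianTrajectory_flow X hΞ3,
    rfl, rfl, rfl,
    cos_pi_div_four_mul_add_sin_pi_div_four_mul _ _,
    (momentumFlow_one_div X hΞ3 _).trans (cos_pi_div_four_mul_sub_sin_pi_div_four_mul _ _),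
    cos_pi_div_four_mul_add_sin_pi_div_four_mul _ _,
    (momentumFlow_two_div X hΞ3 _).trans (cos_pi_div_four_mul_sub_sin_pi_div_four_mul _ _)⟩

/-- The explicit Hamiltonian flow of `f₀ = ξ₃(x₁x₂ + ξ̂₁ξ̂₂)` on `T*ℝ⁴`: the given
curve `γ` starts at `(x⁰, ξ⁰)`, solves Hamilton's equations
`ẋᵢ = ∂f₀/∂ξᵢ`, `ξ̇ᵢ = −∂f₀/∂xᵢ`, and at `t = π/4` fixes `x₀, ξ₀, ξ₃` while
sending `(x₁, ξ̂₁; x₂, ξ̂₂)` to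
`((x₁ + ξ̂₂)/√2, (ξ̂₁ − x₂)/√2; (x₂ + ξ̂₁)/√2, (ξ̂₂ − x₁)/√2)`. -/
theorem hamilton_flow_f0 (X Ξ : Fin 4 → ℝ) (hΞ3 : 0 < Ξ 3) :
    let f₀ : (Fin 4 → ℝ) → (Fin 4 → ℝ) → ℝ :=
      fun x ξ => ξ 3 * x 1 * x 2 + ξ 1 * ξ 2 / ξ 3
    let γx : ℝ → Fin 4 → ℝ := fun t =>
      ![X 0,
        Real.cos t * X 1 + Real.sin t * (Ξ 2 / Ξ 3),
        Real.cos t * X 2 + Real.sin t * (Ξ 1 / Ξ 3),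
        X 3 + (Real.sin (2 * t) / 2) * (X 1 * X 2 - Ξ 1 * Ξ 2 / (Ξ 3) ^ 2)
            + ((1 - Real.cos (2 * t)) / 2) * ((X 1 * Ξ 1 + X 2 * Ξ 2) / Ξ 3)]
    let γξ : ℝ → Fin 4 → ℝ := fun t =>
      ![Ξ 0,
        Real.cos t * Ξ 1 - Real.sin t * (Ξ 3 * X 2),
        Real.cos t * Ξ 2 - Real.sin t * (Ξ 3 * X 1),
        Ξ 3]
    (γx 0 = X ∧ γξ 0 = Ξ) ∧
    (∀ (t : ℝ) (i : Fin 4),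
      HasDerivAt (fun s => γx s i)
        (deriv (fun u => f₀ (γx t) (Function.update (γξ t) i u)) (γξ t i)) t ∧
      HasDerivAt (fun s => γξ s i)
        (-(deriv (fun u => f₀ (Function.update (γx t) i u) (γξ t)) (γx t i))) t) ∧
    (γx (π / 4) 0 = X 0 ∧ γξ (π / 4) 0 = Ξ 0 ∧ γξ (π / 4) 3 = Ξ 3 ∧
     γx (π / 4) 1 = (X 1 + Ξ 2 / Ξ 3) / Real.sqrt 2 ∧
     γξ (π / 4) 1 / Ξ 3 = (Ξ 1 / Ξ 3 - X 2) / Real.sqrt 2 ∧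
     γx (π / 4) 2 = (X 2 + Ξ 1 / Ξ 3) / Real.sqrt 2 ∧
     γξ (π / 4) 2 / Ξ 3 = (Ξ 2 / Ξ 3 - X 1) / Real.sqrt 2) :=
  hamilton_flow_f0_general X Ξ hΞ3.ne'
end

section
/- Let ρ̂ : ℝ × ℝ³ → ℝ be smooth and everywhere positive, with variables (x₀, y). Define w(x₀, Ξ, y) = ρ̂(x₀, y)^{−2}·(1 − Ξ²) and the vector field components V₁(x₀, Ξ, y) = Ξ and V₂(x₀, Ξ, y) = −½·(∂ρ̂/∂x₀)(x₀, y)/ρ̂(x₀, y)·(1 − Ξ²). Then the weighted divergence of V with respect to the density w vanishes identically: for all (x₀, Ξ, y) ∈ ℝ × ℝ × ℝ³, ∂/∂x₀ [ w(x₀, Ξ, y)·V₁(x₀, Ξ, y) ] + ∂/∂Ξ [ w(x₀, Ξ, y)·V₂(x₀, Ξ, y) ] = 0. -/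
/-!
The field `w V` is Hamiltonian: `w V₁ = ∂_Ξ H` and `w V₂ = -∂_{x₀} H` for the stream function
`H = -((1 - Ξ²) / (2 ρ̂))²`, so its divergence is a difference of equal mixed partial derivatives.
As `H` is a product of a function of `Ξ` and a function of `x₀`, first derivatives of the two
factors suffice.
-/

section

variable {𝕜 : Type*} [NontriviallyNormedField 𝕜]

theorem divergence_of_separated_stream_function_eq_zero {a b : 𝕜 → 𝕜} {a' b' x ξ : 𝕜}
    (ha : HasDerivAt a a' ξ) (hb : HasDerivAt b b' x) :
    deriv (fun s => a' * b s) x + deriv (fun t => -(b' * a t)) ξ = 0 := by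
  rw [(hb.const_mul a').deriv, (ha.const_mul b').fun_neg.deriv, mul_comm, add_neg_cancel]

theorem hasDerivAt_inv_sq {r : 𝕜 → 𝕜} {r' x : 𝕜} (hr : HasDerivAt r r' x) (hx : r x ≠ 0) :
    HasDerivAt (fun s => (r s ^ 2)⁻¹) (-(2 * r') / r x ^ 3) x := by
  refine ((hr.fun_pow 2).fun_inv (pow_ne_zero 2 hx)).congr_deriv ?_
  push_cast
  field_simp

theorem hasDerivAt_neg_sq_half_one_sub_sq [NeZero (2 : 𝕜)] (ξ : 𝕜) :
    HasDerivAt (fun t => -((1 - t ^ 2) / 2) ^ 2) ((1 - ξ ^ 2) * ξ) ξ := by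
  refine ((((hasDerivAt_pow 2 ξ).const_sub 1).div_const 2).fun_pow 2).fun_neg.congr_deriv ?_
  push_cast
  field_simp

theorem weighted_divergence_Z_hat_vanishes_general [NeZero (2 : 𝕜)] {r : 𝕜 → 𝕜} {x : 𝕜}
    (hr : DifferentiableAt 𝕜 r x) (hx : r x ≠ 0) (ξ : 𝕜) :
    deriv (fun s => (1 - ξ ^ 2) / r s ^ 2 * ξ) x +
      deriv (fun t => (1 - t ^ 2) / r x ^ 2 *
        (-(1 / 2) * (deriv r x / r x) * (1 - t ^ 2))) ξ = 0 := by
  have hfst (s : 𝕜) : (1 - ξ ^ 2) / r s ^ 2 * ξ = (1 - ξ ^ 2) * ξ * (r s ^ 2)⁻¹ := by ring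
  have hsnd (t : 𝕜) :
      (1 - t ^ 2) / r x ^ 2 * (-(1 / 2) * (deriv r x / r x) * (1 - t ^ 2)) =
        -(-(2 * deriv r x) / r x ^ 3 * -((1 - t ^ 2) / 2) ^ 2) := by
    field_simp
  simp only [hfst, hsnd]
  exact divergence_of_separated_stream_function_eq_zero
    (hasDerivAt_neg_sq_half_one_sub_sq ξ) (hasDerivAt_inv_sq hr.hasDerivAt hx)

end

/-- Coordinate form of the invariance `L_{[Ẑ]} μ_Popp^{SNS*Σ} = 0`: for the density
`w = ρ̂^{−2}(1 − Ξ²)` and the vector field with components `V₁ = Ξ`,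
`V₂ = −½ ρ̂^{−1}ρ̂_{x₀}(1 − Ξ²)`, the weighted divergence
`∂_{x₀}(wV₁) + ∂_Ξ(wV₂)` vanishes identically. -/
theorem weighted_divergence_Z_hat_vanishes
    (ρ : ℝ × (Fin 3 → ℝ) → ℝ) (hρ : ContDiff ℝ (⊤ : ℕ∞) ρ) (hpos : ∀ p, 0 < ρ p) :
    ∀ (x₀ Ξ : ℝ) (y : Fin 3 → ℝ),
      deriv (fun s : ℝ => (1 - Ξ ^ 2) / (ρ (s, y)) ^ 2 * Ξ) x₀ +
        deriv (fun Ξ' : ℝ => (1 - Ξ' ^ 2) / (ρ (x₀, y)) ^ 2 *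
          (-(1 / 2) * (deriv (fun s : ℝ => ρ (s, y)) x₀ / ρ (x₀, y)) * (1 - Ξ' ^ 2))) Ξ
      = 0 := by
  intro x₀ Ξ y
  have hslice : Differentiable ℝ fun s : ℝ => ρ (s, y) :=
    (hρ.differentiable (by simp)).comp (by fun_prop)
  exact weighted_divergence_Z_hat_vanishes_general (hslice x₀) (hpos (x₀, y)).ne' Ξ
end

section
/- Let g : ℝ → ℝ be smooth, set Q(x) = (x₁² + x₂²)/2 on ℝ², φ = g ∘ Q, and define Φ : ℝ → ℝ² → ℝ² by Φ_t(x) = ( cos(t·g'(Q(x)))·x₁ − sin(t·g'(Q(x)))·x₂, sin(t·g'(Q(x)))·x₁ + cos(t·g'(Q(x)))·x₂ ). Then: (i) for every x ∈ ℝ², Φ₀(x) = x and d/dt Φ_t(x) = H_φ(Φ_t(x)), where H_φ(x) = (−∂₂φ(x), ∂₁φ(x)) is the planar Hamiltonian vector field of φ; and (ii) writing λ(x)(w) = ½(x₁w₂ − x₂w₁) for the Liouville 1-form and ψ(x) = −φ(x) + Q(x)·g'(Q(x)), the time-one flow satisfies, for all x, w ∈ ℝ²: λ(Φ₁(x))(DΦ₁(x)·w)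 − λ(x)(w) = Dψ(x)(w), where DΦ₁(x) and Dψ(x) denote Fréchet derivatives. -/
/-!
Rotating by a variable angle `θ` changes the Liouville form only through the derivative of the
angle: if `R` is the rotation and `J` the quarter turn, then `d(R x) = R dx + dθ • J R x`, so
`(x ↦ R x)^* λ = λ + Q dθ`, because `λ` is rotation invariant and `λ(v)(J v) = Q(v)`. The flow of
`g ∘ Q` rotates by `θ = t g'(Q)`, and `Q d(g'(Q)) = d(Q g'(Q) - g(Q))` since
`d(g(Q)) = g'(Q) dQ`; the primitive is the Legendre transform of `g` at the slope `g'(Q)`.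
-/

/-- The quadratic Hamiltonian `Q = (x₁² + x₂²)/2` of the harmonic oscillator. -/
noncomputable def modelQuadratic (x : ℝ × ℝ) : ℝ :=
  (x.1 ^ 2 + x.2 ^ 2) / 2

/-- The standard complex structure `J` of the plane, generating the rotations. -/
def quarterTurn : ℝ × ℝ →L[ℝ] ℝ × ℝ :=
  (-ContinuousLinearMap.snd ℝ ℝ ℝ).prod (ContinuousLinearMap.fst ℝ ℝ ℝ)

/-- The counterclockwise rotation of the plane by the angle `θ`, on the product `ℝ × ℝ` rather than
on a Euclidean space. -/
noncomputable def planeRotation (θ : ℝ) : ℝ × ℝ →L[ℝ] ℝ × ℝ :=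
  (Real.cos θ • ContinuousLinearMap.fst ℝ ℝ ℝ - Real.sin θ • ContinuousLinearMap.snd ℝ ℝ ℝ).prod
    (Real.sin θ • ContinuousLinearMap.fst ℝ ℝ ℝ + Real.cos θ • ContinuousLinearMap.snd ℝ ℝ ℝ)

/-- The Liouville form `λ = ½(x₁dx₂ − x₂dx₁)` at the point `x`, evaluated on the vector `w`. -/
noncomputable def liouvilleForm (x w : ℝ × ℝ) : ℝ :=
  (x.1 * w.2 - x.2 * w.1) / 2

/-- The planar Hamiltonian vector field `H_φ = (−∂₂φ, ∂₁φ)`, with the sign convention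
`H_Q = J`. -/
noncomputable def hamiltonianVectorField (φ : ℝ × ℝ → ℝ) (x : ℝ × ℝ) : ℝ × ℝ :=
  (-(fderiv ℝ φ x (0, 1)), fderiv ℝ φ x (1, 0))

/-- The Hamiltonian flow of `g ∘ Q` at time `t`, in closed form: each circle `{Q = const}` is
rotated with angular speed `g'(Q)`. -/
noncomputable def radialFlow (g : ℝ → ℝ) (t : ℝ) (x : ℝ × ℝ) : ℝ × ℝ :=
  planeRotation (t * deriv g (modelQuadratic x)) x

section Rotation

theorem quarterTurn_apply (x : ℝ × ℝ) : quarterTurn x = (-x.2, x.1) :=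
  rfl

theorem quarterTurn_quarterTurn (x : ℝ × ℝ) : quarterTurn (quarterTurn x) = -x :=
  rfl

theorem planeRotation_apply (θ : ℝ) (x : ℝ × ℝ) :
    planeRotation θ x =
      (Real.cos θ * x.1 - Real.sin θ * x.2, Real.sin θ * x.1 + Real.cos θ * x.2) :=
  rfl

theorem planeRotation_eq_cos_smul_add_sin_smul (θ : ℝ) :
    planeRotation θ =
      Real.cos θ • ContinuousLinearMap.id ℝ (ℝ × ℝ) + Real.sin θ • quarterTurn := by
  ext <;> simp [planeRotation, quarterTurn]

theorem planeRotation_zero : planeRotation 0 = ContinuousLinearMap.id ℝ (ℝ × ℝ) := by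
  simp [planeRotation_eq_cos_smul_add_sin_smul]

theorem modelQuadratic_planeRotation (θ : ℝ) (x : ℝ × ℝ) :
    modelQuadratic (planeRotation θ x) = modelQuadratic x := by
  simp only [modelQuadratic, planeRotation_apply]
  linear_combination (x.1 ^ 2 + x.2 ^ 2) / 2 * Real.sin_sq_add_cos_sq θ

theorem liouvilleForm_planeRotation (θ : ℝ) (x w : ℝ × ℝ) :
    liouvilleForm (planeRotation θ x) (planeRotation θ w) = liouvilleForm x w := by
  simp only [liouvilleForm, planeRotation_apply]
  linear_combination (x.1 * w.2 - x.2 * w.1) / 2 * Real.sin_sq_add_cos_sq θ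

theorem liouvilleForm_add_smul (x v w : ℝ × ℝ) (c : ℝ) :
    liouvilleForm x (v + c • w) = liouvilleForm x v + c * liouvilleForm x w := by
  simp only [liouvilleForm, Prod.fst_add, Prod.snd_add, Prod.smul_fst, Prod.smul_snd, smul_eq_mul]
  ring

theorem liouvilleForm_quarterTurn_self (x : ℝ × ℝ) :
    liouvilleForm x (quarterTurn x) = modelQuadratic x := by
  simp only [liouvilleForm, modelQuadratic, quarterTurn_apply]
  ring

theorem hasDerivAt_planeRotation (θ : ℝ) :
    HasDerivAt planeRotation (quarterTurn ∘L planeRotation θ) θ := by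
  rw [funext planeRotation_eq_cos_smul_add_sin_smul]
  refine (((Real.hasDerivAt_cos θ).smul_const (ContinuousLinearMap.id ℝ (ℝ × ℝ))).add
    ((Real.hasDerivAt_sin θ).smul_const quarterTurn)).congr_deriv ?_
  refine ContinuousLinearMap.ext fun x => ?_
  simp [quarterTurn_quarterTurn, add_comm]

end Rotation

section VariableAngle

variable {F : Type*} [NormedAddCommGroup F] [NormedSpace ℝ F]

theorem hasFDerivAt_planeRotation_apply {θ : F → ℝ} {θ' : F →L[ℝ] ℝ} {f : F → ℝ × ℝ}
    {f' : F →L[ℝ] ℝ × ℝ} {a : F} (hθ : HasFDerivAt θ θ' a) (hf : HasFDerivAt f f' a) :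
    HasFDerivAt (fun y => planeRotation (θ y) (f y))
      (planeRotation (θ a) ∘L f' + θ'.smulRight (quarterTurn (planeRotation (θ a) (f a)))) a := by
  have hrot : HasFDerivAt (fun y => planeRotation (θ y)) _ a :=
    (hasDerivAt_planeRotation (θ a)).hasFDerivAt.comp a hθ
  refine (hrot.clm_apply hf).congr_fderiv (ContinuousLinearMap.ext fun w => ?_)
  simp

theorem liouvilleForm_fderiv_planeRotation_apply {θ : F → ℝ} {f : F → ℝ × ℝ} {a : F}
    (hθ : DifferentiableAt ℝ θ a) (hf : DifferentiableAt ℝ f a) (w : F) :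
    liouvilleForm (planeRotation (θ a) (f a))
        (fderiv ℝ (fun y => planeRotation (θ y) (f y)) a w) =
      liouvilleForm (f a) (fderiv ℝ f a w) + modelQuadratic (f a) * fderiv ℝ θ a w := by
  set R := planeRotation (θ a)
  calc liouvilleForm (R (f a)) (fderiv ℝ (fun y => planeRotation (θ y) (f y)) a w)
      = liouvilleForm (R (f a))
          (R (fderiv ℝ f a w) + fderiv ℝ θ a w • quarterTurn (R (f a))) := by
        rw [(hasFDerivAt_planeRotation_apply hθ.hasFDerivAt hf.hasFDerivAt).fderiv]
        rfl
    _ = liouvilleForm (R (f a)) (R (fderiv ℝ f a w)) +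
          fderiv ℝ θ a w * modelQuadratic (R (f a)) := by
        rw [liouvilleForm_add_smul, liouvilleForm_quarterTurn_self]
    _ = liouvilleForm (f a) (fderiv ℝ f a w) + modelQuadratic (f a) * fderiv ℝ θ a w := by
        rw [liouvilleForm_planeRotation, modelQuadratic_planeRotation, mul_comm]

theorem fderiv_legendre_comp {g : ℝ → ℝ} {u : F → ℝ} {a : F} (hg : DifferentiableAt ℝ g (u a))
    (hg' : DifferentiableAt ℝ (deriv g) (u a)) (hu : DifferentiableAt ℝ u a) :
    fderiv ℝ (fun y => -g (u y) + u y * deriv g (u y)) a =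
      u a • fderiv ℝ (fun y => deriv g (u y)) a := by
  have hgu := hg.hasDerivAt.comp_hasFDerivAt a hu.hasFDerivAt
  have hgu' : DifferentiableAt ℝ (fun y => deriv g (u y)) a := hg'.comp a hu
  refine (hgu.neg.add (hu.hasFDerivAt.mul hgu'.hasFDerivAt)).fderiv.trans ?_
  abel

end VariableAngle

section RadialHamiltonian

variable {g : ℝ → ℝ}

theorem hasFDerivAt_modelQuadratic (x : ℝ × ℝ) :
    HasFDerivAt modelQuadratic
      (x.1 • ContinuousLinearMap.fst ℝ ℝ ℝ + x.2 • ContinuousLinearMap.snd ℝ ℝ ℝ) x := by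
  have hfst : HasFDerivAt Prod.fst (ContinuousLinearMap.fst ℝ ℝ ℝ) x := hasFDerivAt_fst
  have hsnd : HasFDerivAt Prod.snd (ContinuousLinearMap.snd ℝ ℝ ℝ) x := hasFDerivAt_snd
  refine (((hfst.pow 2).add (hsnd.pow 2)).mul_const (2 : ℝ)⁻¹).congr_fderiv ?_
  ext <;> simp

theorem hamiltonianVectorField_comp_modelQuadratic {x : ℝ × ℝ}
    (hg : DifferentiableAt ℝ g (modelQuadratic x)) :
    hamiltonianVectorField (fun y => g (modelQuadratic y)) x =
      deriv g (modelQuadratic x) • quarterTurn x := by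
  have hφ : HasFDerivAt (fun y => g (modelQuadratic y)) _ x :=
    hg.hasDerivAt.comp_hasFDerivAt x (hasFDerivAt_modelQuadratic x)
  ext <;> simp [hamiltonianVectorField, hφ.fderiv, quarterTurn]

theorem radialFlow_zero (g : ℝ → ℝ) (x : ℝ × ℝ) : radialFlow g 0 x = x := by
  rw [radialFlow, zero_mul, planeRotation_zero, ContinuousLinearMap.id_apply]

theorem modelQuadratic_radialFlow (g : ℝ → ℝ) (t : ℝ) (x : ℝ × ℝ) :
    modelQuadratic (radialFlow g t x) = modelQuadratic x :=
  modelQuadratic_planeRotation _ x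

theorem hasDerivAt_radialFlow {x : ℝ × ℝ} (hg : DifferentiableAt ℝ g (modelQuadratic x)) (t : ℝ) :
    HasDerivAt (fun s => radialFlow g s x)
      (hamiltonianVectorField (fun y => g (modelQuadratic y)) (radialFlow g t x)) t := by
  have hQ := modelQuadratic_radialFlow g t x
  rw [hamiltonianVectorField_comp_modelQuadratic (hQ ▸ hg), hQ]
  have hangle := hasDerivAt_mul_const (x := t) (deriv g (modelQuadratic x))
  simpa [radialFlow] using
    ((hasDerivAt_planeRotation _).scomp t hangle).clm_apply (hasDerivAt_const t x)

theorem liouvilleForm_fderiv_radialFlow_sub {x : ℝ × ℝ}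
    (hg : DifferentiableAt ℝ g (modelQuadratic x))
    (hg' : DifferentiableAt ℝ (deriv g) (modelQuadratic x)) (t : ℝ) (w : ℝ × ℝ) :
    liouvilleForm (radialFlow g t x) (fderiv ℝ (radialFlow g t) x w) - liouvilleForm x w =
      t * fderiv ℝ
        (fun y => -g (modelQuadratic y) + modelQuadratic y * deriv g (modelQuadratic y)) x w := by
  have hQ : DifferentiableAt ℝ modelQuadratic x := (hasFDerivAt_modelQuadratic x).differentiableAt
  have hspeed : DifferentiableAt ℝ (fun y => deriv g (modelQuadratic y)) x := hg'.comp x hQ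
  have hpullback : liouvilleForm (radialFlow g t x) (fderiv ℝ (radialFlow g t) x w) = _ :=
    liouvilleForm_fderiv_planeRotation_apply (hspeed.const_mul t) differentiableAt_fun_id w
  rw [hpullback, fderiv_legendre_comp hg hg' hQ, fderiv_const_mul hspeed, fderiv_fun_id]
  simp only [ContinuousLinearMap.id_apply, smul_apply, smul_eq_mul]
  ring

end RadialHamiltonian

theorem radial_hamiltonian_flow_liouville_general (g : ℝ → ℝ) (hg : Differentiable ℝ g)
    (hg' : Differentiable ℝ (deriv g)) :
    (∀ x : ℝ × ℝ, radialFlow g 0 x = x) ∧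
    (∀ (x : ℝ × ℝ) (t : ℝ),
      HasDerivAt (fun s => radialFlow g s x)
        (hamiltonianVectorField (fun y => g (modelQuadratic y)) (radialFlow g t x)) t) ∧
    (∀ (t : ℝ) (x w : ℝ × ℝ),
      liouvilleForm (radialFlow g t x) (fderiv ℝ (radialFlow g t) x w) - liouvilleForm x w =
        t * fderiv ℝ
          (fun y => -g (modelQuadratic y) + modelQuadratic y * deriv g (modelQuadratic y)) x w) :=
  ⟨radialFlow_zero g, fun _ => hasDerivAt_radialFlow (hg _),
    fun t _ => liouvilleForm_fderiv_radialFlow_sub (hg _) (hg' _) t⟩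

/-- The Hamiltonian flow of a radial function `φ = g ∘ Q`, `Q = (x₁² + x₂²)/2`, rotates
each circle `{Q = const}` with angular speed `g'(Q)`; its time-one map changes the
Liouville form `λ = ½(x₁dx₂ − x₂dx₁)` by the exact differential of
`ψ = −φ + Q·g'(Q)`. -/
theorem radial_hamiltonian_flow_liouville (g : ℝ → ℝ) (hg : ContDiff ℝ (⊤ : ℕ∞) g) :
    let Q : ℝ × ℝ → ℝ := fun x => (x.1 ^ 2 + x.2 ^ 2) / 2
    let φ : ℝ × ℝ → ℝ := fun x => g (Q x)
    let Φ : ℝ → ℝ × ℝ → ℝ × ℝ := fun t x =>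
      (Real.cos (t * deriv g (Q x)) * x.1 - Real.sin (t * deriv g (Q x)) * x.2,
       Real.sin (t * deriv g (Q x)) * x.1 + Real.cos (t * deriv g (Q x)) * x.2)
    let lam : ℝ × ℝ → ℝ × ℝ → ℝ := fun x w => (x.1 * w.2 - x.2 * w.1) / 2
    (∀ x : ℝ × ℝ, Φ 0 x = x) ∧
    (∀ (x : ℝ × ℝ) (t : ℝ),
      HasDerivAt (fun s => Φ s x)
        (-(fderiv ℝ φ (Φ t x) (0, 1)), fderiv ℝ φ (Φ t x) (1, 0)) t) ∧
    (∀ x w : ℝ × ℝ,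
      lam (Φ 1 x) (fderiv ℝ (Φ 1) x w) - lam x w
        = fderiv ℝ (fun y => -φ y + Q y * deriv g (Q y)) x w) := by
  obtain ⟨hzero, hflow, hform⟩ := radial_hamiltonian_flow_liouville_general g
    (hg.differentiable (by simp)) ((contDiff_infty_iff_deriv.1 hg).2.differentiable (by simp))
  exact ⟨hzero, hflow, fun x w => (hform 1 x w).trans (one_mul _)⟩
end
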